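/- arXiv:2010.13719 — 5 statements merged into one kernel-verified Lean document; each statement's English description precedes it below -/
import Mathlib

section
/- Let f : ℝⁿ → ℝᵐ be twice continuously differentiable, and suppose K ≥ 0 is such that for every point x and all standard basis vectors eᵢ, eⱼ of ℝⁿ, the second Fréchet derivative satisfies ‖(D²f)(x)(eᵢ, eⱼ)‖₂ ≤ K. Then for every a, h ∈ ℝⁿ, the first-order Taylor remainder satisfies ‖f(a + h) − f(a) − (Df)(a) h‖₂ ≤ (K/2) · ‖h‖₁². -/
/-!
Along the segment from `a` to `a + h` the remainder has second derivative `D²f (h, h)`. Integrating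
a bound `C` on it twice gives `C t`, then `C t² / 2`. The `ℓ¹` norm enters through
`D²f (h, h) = ∑ i j, hᵢ hⱼ D²f (eᵢ, eⱼ)`, whose norm is at most `K ∑ i j, |hᵢ| |hⱼ|`.
-/

open Set

section Bilinear

variable {𝕜 E F G ι κ : Type*} [NormedField 𝕜] [AddCommMonoid E] [Module 𝕜 E]
  [AddCommMonoid F] [Module 𝕜 F] [SeminormedAddCommGroup G] [NormedSpace 𝕜 G] {K : ℝ}

theorem norm_linearMap_apply_sum_smul_le (L : E →ₗ[𝕜] G) (s : Finset ι) (c : ι → 𝕜) {v : ι → E}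
    (hL : ∀ i ∈ s, ‖L (v i)‖ ≤ K) : ‖L (∑ i ∈ s, c i • v i)‖ ≤ K * ∑ i ∈ s, ‖c i‖ := by
  rw [map_sum, Finset.mul_sum]
  refine norm_sum_le_of_le s fun i hi ↦ ?_
  rw [map_smul, norm_smul, mul_comm]
  gcongr
  exact hL i hi

theorem norm_bilinear_apply_sum_smul_le (B : E →ₗ[𝕜] F →ₗ[𝕜] G) (s : Finset ι) (t : Finset κ)
    (c : ι → 𝕜) (d : κ → 𝕜) {v : ι → E} {w : κ → F}
    (hB : ∀ i ∈ s, ∀ j ∈ t, ‖B (v i) (w j)‖ ≤ K) :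
    ‖B (∑ i ∈ s, c i • v i) (∑ j ∈ t, d j • w j)‖ ≤ K * (∑ i ∈ s, ‖c i‖) * ∑ j ∈ t, ‖d j‖ :=
  norm_linearMap_apply_sum_smul_le _ t d fun j hj ↦
    norm_linearMap_apply_sum_smul_le (B.flip (w j)) s c fun i hi ↦ hB i hi j hj

end Bilinear

section Taylor

variable {E F : Type*} [NormedAddCommGroup E] [NormedSpace ℝ E]
  [NormedAddCommGroup F] [NormedSpace ℝ F] {C : ℝ}

theorem norm_taylor_one_remainder_le_of_norm_deriv_deriv_le {φ φ' φ'' : ℝ → F} {a b : ℝ}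
    (hφ : ∀ t ∈ Icc a b, HasDerivWithinAt φ (φ' t) (Icc a b) t)
    (hφ' : ∀ t ∈ Icc a b, HasDerivWithinAt φ' (φ'' t) (Icc a b) t)
    (hC : ∀ t ∈ Ico a b, ‖φ'' t‖ ≤ C) :
    ∀ t ∈ Icc a b, ‖φ t - φ a - (t - a) • φ' a‖ ≤ C / 2 * (t - a) ^ 2 := by
  have hasDeriv_remainder : ∀ t ∈ Icc a b, HasDerivWithinAt
      (fun t ↦ φ t - φ a - (t - a) • φ' a) (φ' t - φ' a) (Icc a b) t := fun t ht ↦ by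
    simpa using ((hφ t ht).sub_const (φ a)).fun_sub
      (((hasDerivWithinAt_id t _).sub_const a).smul_const (φ' a))
  have hasDeriv_bound (t : ℝ) :
      HasDerivAt (fun t ↦ C / 2 * (t - a) ^ 2) (C * (t - a)) t :=
    ((((hasDerivAt_id' t).sub_const a).fun_pow 2).const_mul (C / 2)).congr_deriv
      (by norm_num; ring)
  have norm_deriv_le : ∀ t ∈ Icc a b, ‖φ' t - φ' a‖ ≤ C * (t - a) :=
    norm_image_sub_le_of_norm_deriv_le_segment' hφ' hC
  exact image_norm_le_of_norm_deriv_right_le_deriv_boundary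
    (fun t ht ↦ (hasDeriv_remainder t ht).continuousWithinAt)
    (fun t ht ↦ (hasDeriv_remainder t (Ico_subset_Icc_self ht)).mono_of_mem_nhdsWithin
      (Icc_mem_nhdsGE_of_mem ht))
    (by simp) hasDeriv_bound fun t ht ↦ norm_deriv_le t (Ico_subset_Icc_self ht)

variable {s : Set E} {f : E → F} {f' : E → E →L[ℝ] F} {f'' : E → E →L[ℝ] E →L[ℝ] F} {a h : E}

theorem norm_taylor_one_remainder_le_of_norm_fderiv_fderiv_le (hs : Convex ℝ s)
    (hf : ∀ x ∈ s, HasFDerivWithinAt f (f' x) s x)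
    (hf' : ∀ x ∈ s, HasFDerivWithinAt f' (f'' x) s x)
    (hC : ∀ x ∈ s, ‖f'' x h h‖ ≤ C) (ha : a ∈ s) (hah : a + h ∈ s) :
    ‖f (a + h) - f a - f' a h‖ ≤ C / 2 := by
  have mem : MapsTo (fun t : ℝ ↦ a + t • h) (Icc 0 1) s := fun t ht ↦ hs.add_smul_mem ha hah ht
  have hasDeriv_segment (t : ℝ) :
      HasDerivWithinAt (fun t : ℝ ↦ a + t • h) h (Icc 0 1) t := by
    simpa using ((hasDerivWithinAt_id t _).smul_const h).const_add a
  have hasDeriv_f : ∀ t ∈ Icc (0 : ℝ) 1,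
      HasDerivWithinAt (fun t ↦ f (a + t • h)) (f' (a + t • h) h) (Icc 0 1) t := fun t ht ↦
    (hf _ (mem ht)).comp_hasDerivWithinAt t (hasDeriv_segment t) mem
  have hasDeriv_f' : ∀ t ∈ Icc (0 : ℝ) 1,
      HasDerivWithinAt (fun t ↦ f' (a + t • h) h) (f'' (a + t • h) h h) (Icc 0 1) t := by
    intro t ht
    have hasDeriv_fderiv :
        HasDerivWithinAt (fun t : ℝ ↦ f' (a + t • h)) (f'' (a + t • h) h) (Icc 0 1) t :=
      (hf' _ (mem ht)).comp_hasDerivWithinAt t (hasDeriv_segment t) mem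
    simpa using hasDeriv_fderiv.clm_apply (hasDerivWithinAt_const t _ h)
  simpa using norm_taylor_one_remainder_le_of_norm_deriv_deriv_le hasDeriv_f hasDeriv_f'
    (fun t ht ↦ hC _ (mem (Ico_subset_Icc_self ht))) 1 (right_mem_Icc.2 zero_le_one)

theorem remainder_estimate_general {ι : Type*} {t : Finset ι} {v : ι → E} {c : ι → ℝ} {K : ℝ}
    (hs : Convex ℝ s) (hf : ∀ x ∈ s, HasFDerivWithinAt f (f' x) s x)
    (hf' : ∀ x ∈ s, HasFDerivWithinAt f' (f'' x) s x)
    (hK : ∀ x ∈ s, ∀ i ∈ t, ∀ j ∈ t, ‖f'' x (v i) (v j)‖ ≤ K)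
    (ha : a ∈ s) (hah : a + h ∈ s) (hh : ∑ i ∈ t, c i • v i = h) :
    ‖f (a + h) - f a - f' a h‖ ≤ K / 2 * (∑ i ∈ t, |c i|) ^ 2 := by
  have hC : ∀ x ∈ s, ‖f'' x h h‖ ≤ K * (∑ i ∈ t, |c i|) * ∑ i ∈ t, |c i| := fun x hx ↦ by
    simpa [hh] using norm_bilinear_apply_sum_smul_le (f'' x).toLinearMap₁₂ t t c c (hK x hx)
  exact (norm_taylor_one_remainder_le_of_norm_fderiv_fderiv_le hs hf hf' hC ha hah).trans_eq
    (by ring)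

end Taylor

/-- **Lemma 1 (Estimation of Remainder Term), per-subsystem version.**
If `f : ℝⁿ → ℝᵐ` is twice continuously differentiable and all second partial
derivatives are bounded by `K` in Euclidean norm, then the first-order Taylor
remainder satisfies `‖f(a+h) - f(a) - Df(a)h‖₂ ≤ (K/2)‖h‖₁²`. -/
theorem remainder_estimate
    (n m : ℕ) (f : EuclideanSpace ℝ (Fin n) → EuclideanSpace ℝ (Fin m))
    (hf : ContDiff ℝ 2 f) (K : ℝ) (hK : 0 ≤ K)
    (hbound : ∀ (x : EuclideanSpace ℝ (Fin n)) (i j : Fin n),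
      ‖iteratedFDeriv ℝ 2 f x
        ![EuclideanSpace.single i (1 : ℝ), EuclideanSpace.single j (1 : ℝ)]‖ ≤ K)
    (a h : EuclideanSpace ℝ (Fin n)) :
    ‖f (a + h) - f a - fderiv ℝ f a h‖ ≤ (K / 2) * (∑ i, |h i|) ^ 2 := by
  have hf' : Differentiable ℝ (fderiv ℝ f) :=
    (hf.fderiv_right (m := 1) (by norm_num)).differentiable one_ne_zero
  exact remainder_estimate_general convex_univ
    (fun x _ ↦ (hf.differentiable two_ne_zero x).hasFDerivAt.hasFDerivWithinAt)
    (fun x _ ↦ (hf' x).hasFDerivAt.hasFDerivWithinAt)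
    (fun x _ i _ j _ ↦ by simpa [iteratedFDeriv_two_apply] using hbound x i j)
    (mem_univ a) (mem_univ (a + h)) ((EuclideanSpace.basisFun (Fin n) ℝ).sum_repr h)
end

section
/- Let S : ℝⁿ → ℝᵐ be a linear map, b ∈ ℝᵐ, and let σ > 0, K > 0, ε > 0, Z ≥ 0 be real constants. Let â ∈ ℝⁿ (the actual attack) and a* ∈ ℝⁿ (a feasible solution) satisfy: (i) σ · ‖x‖₂ ≤ ‖S x‖₂ for all x ∈ ℝⁿ; (ii) ‖b − S â‖₂ ≤ (K/2) · (‖â‖₁ + Z)²; (iii) S a* = b; and (iv) ‖â‖₁ + Z ≤ δ, where δ := √(2εσ/K). Then ‖â − a*‖₂ ≤ ε. -/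
lemma norm_sub_le_div_of_mul_norm_le_norm_map {E F 𝓕 : Type*} [SeminormedAddCommGroup E]
    [SeminormedAddCommGroup F] [FunLike 𝓕 E F] [AddMonoidHomClass 𝓕 E F] {f : 𝓕} {σ : ℝ}
    (hσ : 0 < σ) (hf : ∀ x, σ * ‖x‖ ≤ ‖f x‖) (x y : E) :
    ‖x - y‖ ≤ ‖f x - f y‖ / σ := by
  rw [le_div_iff₀' hσ, ← map_sub]
  exact hf (x - y)

lemma half_mul_sq_le_iff_le_sqrt {K c r : ℝ} (hK : 0 < K) (hc : 0 ≤ c) (hr : 0 ≤ r) :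
    K / 2 * r ^ 2 ≤ c ↔ r ≤ √(2 * c / K) := by
  rw [Real.le_sqrt hr (by positivity), le_div_iff₀' hK, div_mul_eq_mul_div,
    div_le_iff₀' two_pos]

theorem eps_delta_criterion_general {E F 𝓕 : Type*} [SeminormedAddCommGroup E]
    [SeminormedAddCommGroup F] [FunLike 𝓕 E F] [AddMonoidHomClass 𝓕 E F] {S : 𝓕} {b : F}
    {σ K ε r : ℝ} (hσ : 0 < σ) (hK : 0 < K) (hε : 0 ≤ ε) (hr : 0 ≤ r) {ahat astar : E}
    (hlow : ∀ x, σ * ‖x‖ ≤ ‖S x‖) (hrem : ‖b - S ahat‖ ≤ K / 2 * r ^ 2)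
    (hfeas : S astar = b) (hδ : r ≤ √(2 * ε * σ / K)) :
    ‖ahat - astar‖ ≤ ε := by
  have hquad : K / 2 * r ^ 2 ≤ ε * σ := by
    rw [mul_assoc] at hδ
    exact (half_mul_sq_le_iff_le_sqrt hK (mul_nonneg hε hσ.le) hr).2 hδ
  calc
    ‖ahat - astar‖ ≤ ‖S ahat - S astar‖ / σ :=
      norm_sub_le_div_of_mul_norm_le_norm_map hσ hlow ahat astar
    _ = ‖b - S ahat‖ / σ := by rw [hfeas, norm_sub_rev]
    _ ≤ ε := (div_le_iff₀ hσ).2 (hrem.trans hquad)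

/-- **Lemma 2 (ε-δ-Criterion).**
If `σ‖x‖₂ ≤ ‖Sx‖₂` for all `x`, the actual attack `â` satisfies the remainder
bound `‖b - Sâ‖₂ ≤ (K/2)(‖â‖₁ + Z)²`, the computed solution `a*` is feasible
(`S a* = b`), and `‖â‖₁ + Z ≤ δ := √(2εσ/K)`, then `‖â - a*‖₂ ≤ ε`. -/
theorem eps_delta_criterion
    (n m : ℕ) (S : EuclideanSpace ℝ (Fin n) →ₗ[ℝ] EuclideanSpace ℝ (Fin m))
    (b : EuclideanSpace ℝ (Fin m)) (σ K ε Z : ℝ)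
    (hσ : 0 < σ) (hK : 0 < K) (hε : 0 < ε) (hZ : 0 ≤ Z)
    (ahat astar : EuclideanSpace ℝ (Fin n))
    (hlow : ∀ x : EuclideanSpace ℝ (Fin n), σ * ‖x‖ ≤ ‖S x‖)
    (hrem : ‖b - S ahat‖ ≤ (K / 2) * ((∑ i, |ahat i|) + Z) ^ 2)
    (hfeas : S astar = b)
    (hδ : (∑ i, |ahat i|) + Z ≤ Real.sqrt (2 * ε * σ / K)) :
    ‖ahat - astar‖ ≤ ε := by
  have hr : 0 ≤ (∑ i, |ahat i|) + Z := by positivity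
  exact eps_delta_criterion_general hσ hK hε.le hr hlow hrem hfeas hδ
end

section
/- Let S : ℝⁿ → ℝᵐ be a linear map, b ∈ ℝᵐ, and let σ > 0, K > 0, Z ≥ 0 be real constants. Let â ∈ ℝⁿ be nonzero and let ε > 0 satisfy ε < |âᵢ| for every index i with âᵢ ≠ 0. Let a* ∈ ℝⁿ satisfy: (i) σ · ‖x‖₂ ≤ ‖S x‖₂ for all x ∈ ℝⁿ; (ii) ‖b − S â‖₂ ≤ (K/2) · (‖â‖₁ + Z)²; (iii) S a* = b; and (iv) ‖â‖₁ + Z ≤ √(2εσ/K). Then supp(â) ⊆ supp(a*), i.e. {i : âᵢ ≠ 0} ⊆ {i : a*ᵢ ≠ 0}. -/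
/-!
The square-root condition is calibrated so that the quadratic remainder is at most `ε * σ`. Dividing
by the lower bound `σ`, the identified attack lies within `ε` of the actual one, so a component
larger than `ε` cannot vanish in the actual attack.
-/

theorem half_mul_sq_le_of_le_sqrt {K c d : ℝ} (hK : 0 < K) (hc : 0 ≤ c) (hd : 0 ≤ d)
    (h : d ≤ √(2 * c / K)) : K / 2 * d ^ 2 ≤ c :=
  calc
    K / 2 * d ^ 2 ≤ K / 2 * (2 * c / K) := by
      gcongr
      exact (Real.le_sqrt hd (by positivity)).mp h
    _ = c := by field_simp

theorem norm_sub_le_of_quadratic_residual {E F : Type*} [SeminormedAddCommGroup E]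
    [SeminormedAddCommGroup F] {f : E → F} {x y : E} {σ K ε d : ℝ} (hσ : 0 < σ) (hK : 0 < K)
    (hε : 0 ≤ ε) (hd : 0 ≤ d) (hlow : σ * ‖x - y‖ ≤ ‖f x - f y‖)
    (hres : ‖f x - f y‖ ≤ K / 2 * d ^ 2) (hδ : d ≤ √(2 * ε * σ / K)) : ‖x - y‖ ≤ ε := by
  rw [mul_assoc] at hδ
  have hscaled : σ * ‖x - y‖ ≤ σ * ε :=
    calc
      σ * ‖x - y‖ ≤ ‖f x - f y‖ := hlow
      _ ≤ K / 2 * d ^ 2 := hres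
      _ ≤ ε * σ := half_mul_sq_le_of_le_sqrt hK (by positivity) hd hδ
      _ = σ * ε := mul_comm ε σ
  exact le_of_mul_le_mul_left hscaled hσ

theorem setOf_ne_zero_subset_of_norm_sub_le {ι : Type*} {β : ι → Type*}
    [∀ i, SeminormedAddCommGroup (β i)] {x y : ∀ i, β i} {ε : ℝ}
    (hxy : ∀ i, ‖x i - y i‖ ≤ ε) (hy : ∀ i, y i ≠ 0 → ε < ‖y i‖) :
    {i | y i ≠ 0} ⊆ {i | x i ≠ 0} := by
  intro i hyi hxi
  have hsmall : ‖y i‖ ≤ ε := by simpa only [hxi, zero_sub, norm_neg] using hxy i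
  exact (hy i hyi).not_ge hsmall

theorem correct_superset_identification_general {ι F : Type*} [Fintype ι] {p : ENNReal}
    [Fact (1 ≤ p)] {β : ι → Type*} [∀ i, SeminormedAddCommGroup (β i)] [SeminormedAddCommGroup F]
    {f : PiLp p β → F} {b : F} {σ K ε d : ℝ} {ahat astar : PiLp p β}
    (hσ : 0 < σ) (hK : 0 < K) (hε : 0 ≤ ε) (hd : 0 ≤ d)
    (hεmin : ∀ i, ahat i ≠ 0 → ε < ‖ahat i‖)
    (hlow : ∀ x y, σ * ‖x - y‖ ≤ ‖f x - f y‖)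
    (hrem : ‖b - f ahat‖ ≤ K / 2 * d ^ 2) (hfeas : f astar = b) (hδ : d ≤ √(2 * ε * σ / K)) :
    {i | ahat i ≠ 0} ⊆ {i | astar i ≠ 0} := by
  subst hfeas
  have hclose : ‖astar - ahat‖ ≤ ε :=
    norm_sub_le_of_quadratic_residual hσ hK hε hd (hlow astar ahat) hrem hδ
  exact setOf_ne_zero_subset_of_norm_sub_le
    (fun i ↦ (PiLp.norm_apply_le (astar - ahat) i).trans hclose) hεmin

/-- **Theorem 1 (Correct Superset-Identification).**
Under the smallest-singular-value bound, the Taylor remainder bound, feasibility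
of `a*` for the identification problem, and the smallness condition
`‖â‖₁ + Z ≤ √(2εσ/K)` with `ε < min_{i ∈ supp(â)} |âᵢ|`, every attacked
component is identified: `supp(â) ⊆ supp(a*)`. -/
theorem correct_superset_identification
    (n m : ℕ) (S : EuclideanSpace ℝ (Fin n) →ₗ[ℝ] EuclideanSpace ℝ (Fin m))
    (b : EuclideanSpace ℝ (Fin m)) (σ K Z ε : ℝ)
    (hσ : 0 < σ) (hK : 0 < K) (hZ : 0 ≤ Z)
    (ahat astar : EuclideanSpace ℝ (Fin n))
    (hahat : ahat ≠ 0) (hε : 0 < ε)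
    (hεmin : ∀ i : Fin n, ahat i ≠ 0 → ε < |ahat i|)
    (hlow : ∀ x : EuclideanSpace ℝ (Fin n), σ * ‖x‖ ≤ ‖S x‖)
    (hrem : ‖b - S ahat‖ ≤ (K / 2) * ((∑ i, |ahat i|) + Z) ^ 2)
    (hfeas : S astar = b)
    (hδ : (∑ i, |ahat i|) + Z ≤ Real.sqrt (2 * ε * σ / K)) :
    {i : Fin n | ahat i ≠ 0} ⊆ {i : Fin n | astar i ≠ 0} := by
  have hlow_sub x y : σ * ‖x - y‖ ≤ ‖S x - S y‖ := by simpa only [map_sub] using hlow (x - y)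
  exact correct_superset_identification_general hσ hK hε.le (by positivity) hεmin hlow_sub
    hrem hfeas hδ
end

section
/- Let S : ℝⁿ → ℝᵐ be a linear map, b ∈ ℝᵐ, and let σ > 0, K > 0, ε > 0, Z ≥ 0 be real constants. Let â, a* ∈ ℝⁿ satisfy: (i) σ · ‖x‖₂ ≤ ‖S x‖₂ for all x ∈ ℝⁿ; (ii) ‖b − S â‖₂ ≤ (K/2) · (‖â‖₁ + Z)²; (iii) ‖b − S a*‖₂ ≤ (ε/2) · σ; and (iv) ‖â‖₁ + Z ≤ δ̃, where δ̃ := √(εσ/K). Then ‖â − a*‖₂ ≤ ε. -/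
/-!
Since `S` is bounded below by `σ`, `σ ‖â - a*‖` is at most the sum of the residuals of `â` and `a*`.
Tightening the threshold from `√(2εσ/K)` to `√(εσ/K)` halves the bound on the residual of `â`
from `εσ` to `εσ/2`, which leaves room for a residual of the same size at `a*`.
-/

theorem mul_norm_sub_le_norm_sub_map_add_norm_sub_map {𝓕 E F : Type*}
    [SeminormedAddGroup E] [SeminormedAddGroup F] [FunLike 𝓕 E F] [AddMonoidHomClass 𝓕 E F]
    {S : 𝓕} {σ : ℝ} (hlow : ∀ x, σ * ‖x‖ ≤ ‖S x‖) (b : F) (x y : E) :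
    σ * ‖x - y‖ ≤ ‖b - S x‖ + ‖b - S y‖ :=
  calc σ * ‖x - y‖ ≤ ‖S (x - y)‖ := hlow (x - y)
    _ = ‖S x - S y‖ := by rw [map_sub]
    _ ≤ ‖S x - b‖ + ‖b - S y‖ := norm_sub_le_norm_sub_add_norm_sub _ _ _
    _ = ‖b - S x‖ + ‖b - S y‖ := by rw [norm_sub_rev]

theorem le_sqrt_div_iff_mul_sq_le {K c r : ℝ} (hK : 0 < K) (hc : 0 ≤ c) (hr : 0 ≤ r) :
    r ≤ √(c / K) ↔ K * r ^ 2 ≤ c := by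
  rw [Real.le_sqrt hr (div_nonneg hc hK.le), le_div_iff₀' hK]

theorem relaxed_eps_delta_criterion_general {𝓕 E F : Type*}
    [SeminormedAddGroup E] [SeminormedAddGroup F] [FunLike 𝓕 E F] [AddMonoidHomClass 𝓕 E F]
    {S : 𝓕} {b : F} {σ K ε r : ℝ} (hσ : 0 < σ) (hK : 0 < K) (hr : 0 ≤ r) {ahat astar : E}
    (hlow : ∀ x, σ * ‖x‖ ≤ ‖S x‖)
    (hrem : ‖b - S ahat‖ ≤ K / 2 * r ^ 2)
    (hfeas : ‖b - S astar‖ ≤ ε / 2 * σ)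
    (hδ : r ≤ √(ε * σ / K)) :
    ‖ahat - astar‖ ≤ ε := by
  have hεσ : 0 ≤ ε * σ := by linarith [norm_nonneg (b - S astar)]
  have hthreshold : K * r ^ 2 ≤ ε * σ := (le_sqrt_div_iff_mul_sq_le hK hεσ hr).mp hδ
  have hresidual : ‖b - S ahat‖ ≤ ε / 2 * σ := by linarith
  refine le_of_mul_le_mul_left ?_ hσ
  calc σ * ‖ahat - astar‖ ≤ ‖b - S ahat‖ + ‖b - S astar‖ :=
        mul_norm_sub_le_norm_sub_map_add_norm_sub_map hlow b ahat astar
    _ ≤ ε / 2 * σ + ε / 2 * σ := add_le_add hresidual hfeas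
    _ = σ * ε := by ring

/-- **Relaxed ε-δ-criterion (first step of the proof of Theorem 2).**
If `a*` is only feasible for the relaxed identification problem
(`‖b - S a*‖₂ ≤ (ε/2)σ`) and the smallness threshold is tightened to
`δ̃ = √(εσ/K)`, then still `‖â - a*‖₂ ≤ ε`. -/
theorem relaxed_eps_delta_criterion
    (n m : ℕ) (S : EuclideanSpace ℝ (Fin n) →ₗ[ℝ] EuclideanSpace ℝ (Fin m))
    (b : EuclideanSpace ℝ (Fin m)) (σ K ε Z : ℝ)
    (hσ : 0 < σ) (hK : 0 < K) (hε : 0 < ε) (hZ : 0 ≤ Z)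
    (ahat astar : EuclideanSpace ℝ (Fin n))
    (hlow : ∀ x : EuclideanSpace ℝ (Fin n), σ * ‖x‖ ≤ ‖S x‖)
    (hrem : ‖b - S ahat‖ ≤ (K / 2) * ((∑ i, |ahat i|) + Z) ^ 2)
    (hfeas : ‖b - S astar‖ ≤ (ε / 2) * σ)
    (hδ : (∑ i, |ahat i|) + Z ≤ Real.sqrt (ε * σ / K)) :
    ‖ahat - astar‖ ≤ ε :=
  relaxed_eps_delta_criterion_general hσ hK
    (add_nonneg (Finset.sum_nonneg fun i _ => abs_nonneg (ahat i)) hZ) hlow hrem hfeas hδ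
end

section
/- Let S : ℝⁿ → ℝᵐ be a linear map, b ∈ ℝᵐ, and let σ > 0, K > 0, Z ≥ 0 be real constants. Let â ∈ ℝⁿ be nonzero and let ε > 0 satisfy ε < |âᵢ| for every index i with âᵢ ≠ 0. Suppose: (i) σ · ‖x‖₂ ≤ ‖S x‖₂ for all x ∈ ℝⁿ; (ii) ‖b − S â‖₂ ≤ (K/2) · (‖â‖₁ + Z)²; (iii) ‖â‖₁ + Z ≤ δ̃, where δ̃ := √(εσ/K). Let a* ∈ ℝⁿ be a globally optimal solution of the relaxed problem, i.e. ‖b − S a*‖₂ ≤ (ε/2)·σ, and for every a ∈ ℝⁿ with ‖b − S a‖₂ ≤ (ε/2)·σ the number of nonzero components of a* is at most the number of nonzero components of a. Then supp(a*) = supp(â), i.e. {i : a*ᵢ ≠ 0} = {i : âᵢ ≠ 0}. -/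
/-!
Two points whose residuals are at most `(ε / 2) * σ` lie within `ε` of each other, because `S`
expands norms by at least `σ`. The bound on `‖â‖₁ + Z` makes `â` itself such a point, so `a*` cannot
vanish on the support of `â`, where the entries exceed `ε`. Optimality of `a*` bounds its support
size by that of `â`, hence the inclusion of supports is an equality.
-/

theorem mul_sq_le_of_le_sqrt_div {K c r : ℝ} (hK : 0 < K) (hc : 0 ≤ c) (hr : 0 ≤ r)
    (h : r ≤ √(c / K)) : K * r ^ 2 ≤ c :=
  (le_div_iff₀' hK).mp ((Real.le_sqrt hr (by positivity)).mp h)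

theorem mul_norm_sub_le_norm_residual_add_norm_residual {E F : Type*} [AddGroup E] [Norm E]
    [SeminormedAddCommGroup F] {S : E →+ F} {σ : ℝ} (hlow : ∀ x, σ * ‖x‖ ≤ ‖S x‖)
    (b : F) (x y : E) : σ * ‖x - y‖ ≤ ‖b - S x‖ + ‖b - S y‖ :=
  calc σ * ‖x - y‖ ≤ ‖S (x - y)‖ := hlow _
    _ = ‖(b - S y) - (b - S x)‖ := by rw [map_sub, sub_sub_sub_cancel_left]
    _ ≤ ‖b - S y‖ + ‖b - S x‖ := norm_sub_le _ _
    _ = ‖b - S x‖ + ‖b - S y‖ := add_comm _ _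

theorem setOf_ne_zero_eq_of_subset_of_hammingNorm_le {ι : Type*} [Fintype ι] {E : ι → Type*}
    [∀ i, Zero (E i)] [∀ i, DecidableEq (E i)] {x y : ∀ i, E i}
    (hsub : {i | x i ≠ 0} ⊆ {i | y i ≠ 0}) (hcard : hammingNorm y ≤ hammingNorm x) :
    {i | x i ≠ 0} = {i | y i ≠ 0} := by
  have hfin : Finset.univ.filter (x · ≠ 0) = Finset.univ.filter (y · ≠ 0) :=
    Finset.eq_of_subset_of_card_le (Finset.monotone_filter_right _ fun _ _ hi ↦ hsub hi) hcard
  simpa using congrArg (fun s : Finset ι ↦ (s : Set ι)) hfin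

section PiLp

variable {ι : Type*} [Fintype ι] {E : ι → Type*} [∀ i, NormedAddCommGroup (E i)]
  {p : ENNReal} [Fact (1 ≤ p)]

theorem apply_ne_zero_of_norm_sub_lt {x y : PiLp p E} {i : ι} (h : ‖x - y‖ < ‖x i‖) :
    y i ≠ 0 := by
  intro hy
  have hcoord : ‖x i‖ ≤ ‖x - y‖ := by
    simpa [hy] using PiLp.norm_apply_le (x - y) i
  exact hcoord.not_gt h

variable [∀ i, DecidableEq (E i)] {F : Type*} [SeminormedAddCommGroup F]
  {S : PiLp p E →+ F} {b : F} {σ ε : ℝ} {ahat astar : PiLp p E}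

theorem setOf_ne_zero_eq_of_residual_le_of_hammingNorm_le (hσ : 0 < σ)
    (hlow : ∀ x, σ * ‖x‖ ≤ ‖S x‖)
    (hεmin : ∀ i, ahat i ≠ 0 → ε < ‖ahat i‖)
    (hfeas_hat : ‖b - S ahat‖ ≤ (ε / 2) * σ)
    (hfeas : ‖b - S astar‖ ≤ (ε / 2) * σ)
    (hcard : hammingNorm astar.ofLp ≤ hammingNorm ahat.ofLp) :
    {i | astar i ≠ 0} = {i | ahat i ≠ 0} := by
  have hdist : ‖ahat - astar‖ ≤ ε := by
    refine le_of_mul_le_mul_left ?_ hσ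
    linarith [mul_norm_sub_le_norm_residual_add_norm_residual hlow b ahat astar]
  have hsub : {i | ahat i ≠ 0} ⊆ {i | astar i ≠ 0} := fun i hi ↦
    apply_ne_zero_of_norm_sub_lt (hdist.trans_lt (hεmin i hi))
  exact (setOf_ne_zero_eq_of_subset_of_hammingNorm_le hsub hcard).symm

theorem exact_identification_general {K Z : ℝ} (hσ : 0 < σ) (hK : 0 < K) (hZ : 0 ≤ Z)
    (hε : 0 ≤ ε)
    (hεmin : ∀ i, ahat i ≠ 0 → ε < ‖ahat i‖)
    (hlow : ∀ x, σ * ‖x‖ ≤ ‖S x‖)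
    (hrem : ‖b - S ahat‖ ≤ (K / 2) * ((∑ i, ‖ahat i‖) + Z) ^ 2)
    (hδ : (∑ i, ‖ahat i‖) + Z ≤ √(ε * σ / K))
    (hfeas : ‖b - S astar‖ ≤ (ε / 2) * σ)
    (hopt : ∀ a : PiLp p E, ‖b - S a‖ ≤ (ε / 2) * σ →
      hammingNorm astar.ofLp ≤ hammingNorm a.ofLp) :
    {i | astar i ≠ 0} = {i | ahat i ≠ 0} := by
  have hsq : K * ((∑ i, ‖ahat i‖) + Z) ^ 2 ≤ ε * σ :=
    mul_sq_le_of_le_sqrt_div hK (by positivity) (by positivity) hδ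
  have hfeas_hat : ‖b - S ahat‖ ≤ (ε / 2) * σ := by linarith
  exact setOf_ne_zero_eq_of_residual_le_of_hammingNorm_le hσ hlow hεmin hfeas_hat hfeas
    (hopt ahat hfeas_hat)

end PiLp

/-- **Theorem 2 (Exact Identification).**
If `a*` is a globally optimal solution of the relaxed identification problem
`min ‖Δa‖₀ s.t. ‖b - SΔa‖₂ ≤ (ε/2)σ`, the smallest-singular-value bound and the
Taylor remainder bound hold, and `‖â‖₁ + Z ≤ δ̃ := √(εσ/K)` with
`ε < min_{i ∈ supp(â)} |âᵢ|`, then `supp(a*) = supp(â)`. -/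
theorem exact_identification
    (n m : ℕ) (S : EuclideanSpace ℝ (Fin n) →ₗ[ℝ] EuclideanSpace ℝ (Fin m))
    (b : EuclideanSpace ℝ (Fin m)) (σ K Z ε : ℝ)
    (hσ : 0 < σ) (hK : 0 < K) (hZ : 0 ≤ Z)
    (ahat astar : EuclideanSpace ℝ (Fin n))
    (hahat : ahat ≠ 0) (hε : 0 < ε)
    (hεmin : ∀ i : Fin n, ahat i ≠ 0 → ε < |ahat i|)
    (hlow : ∀ x : EuclideanSpace ℝ (Fin n), σ * ‖x‖ ≤ ‖S x‖)
    (hrem : ‖b - S ahat‖ ≤ (K / 2) * ((∑ i, |ahat i|) + Z) ^ 2)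
    (hδ : (∑ i, |ahat i|) + Z ≤ Real.sqrt (ε * σ / K))
    (hfeas : ‖b - S astar‖ ≤ (ε / 2) * σ)
    (hopt : ∀ a : EuclideanSpace ℝ (Fin n), ‖b - S a‖ ≤ (ε / 2) * σ →
      (Finset.univ.filter (fun i : Fin n => astar i ≠ 0)).card ≤
        (Finset.univ.filter (fun i : Fin n => a i ≠ 0)).card) :
    {i : Fin n | astar i ≠ 0} = {i : Fin n | ahat i ≠ 0} := by
  exact exact_identification_general (S := S.toAddMonoidHom) hσ hK hZ hε.le hεmin hlow hrem hδ
    hfeas hopt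
end
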